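/- Fix n ≥ 1 and let m be any index that maximizes the number of quasi-Stirling permutations of size n with exactly m descents (i.e., |{w ∈ Q̄_n : des(w) = m}| ≥ |{w ∈ Q̄_n : des(w) = j}| for all j). Then |m − (3n+1)/4| < 1. -/

import Mathlib

open Finset
open scoped Classical

/-- Number of descents of a word `w` of length `N` over a linearly ordered
alphabet.  Positions are 0-indexed: a position `i` is a descent if it is the
last position or the letter at `i` is greater than the letter at `i + 1`. -/
noncomputable def desW {α : Type*} [LinearOrder α] {N : ℕ} (w : Fin N → α) : ℕ :=
  (univ.filter fun i : Fin N =>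
    (i : ℕ) + 1 = N ∨ ∃ h : (i : ℕ) + 1 < N, w ⟨(i : ℕ) + 1, h⟩ < w i).card

/-- The set of quasi-Stirling permutations of size `n`, encoded as words
`w : Fin (2 * n) → Fin n` (the letters `1, …, n` are encoded as the elements
of `Fin n`) in which every letter occurs exactly twice and there are no indices
`i < j < l < p` with `w i = w l`, `w j = w p` and `w i ≠ w j`. -/
noncomputable def quasiStirlingSet (n : ℕ) : Finset (Fin (2 * n) → Fin n) :=
  univ.filter fun w =>
    (∀ a : Fin n, (univ.filter fun i => w i = a).card = 2) ∧
    ∀ i j l p : Fin (2 * n), i < j → j < l → l < p →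
      w i = w l → w j = w p → w i = w j

/-!
Substitute `q = t / (1 - t)` in the descent polynomial `∑ w, t ^ desW w`, divided by
`(1 - t) ^ (2 * n + 1)`, to get a weight that is multiplicative under the decomposition `u M v M x`
of a word around the two occurrences of its maximal letter `M`. Summing over the slots for `M v M`
in `u x` applies the derivation `D = q (1 + q) d/dq` to the weight of `u x`, so the exponential
generating function `F` of the weights solves the Burgers equation `∂F/∂z = F * D F` with
`F(0) = 1 + q`. Lagrange inversion gives `(n + 1) * Fₙ = D ^ n ((1 + q) ^ (n + 1))`.

Each application of `D` keeps all roots real and in `[-1, 0]`, and determines how their sum changes.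
Hence, up to a positive constant, the descent polynomial is the probability generating function of a
sum of `2 * n + 1` independent Bernoulli variables with total mean `(3 * n + 1) / 4`, and Darroch's
theorem places its mode within distance `1` of the mean.
-/

open Polynomial
open scoped List

section Darroch

/-- The probability generating function of a sum of independent Bernoulli variables whose success
probabilities are the elements of the multiset `s`. -/
noncomputable def bernoulliSumPGF (s : Multiset ℝ) : ℝ[X] :=
  (s.map fun p => C p * X + C (1 - p)).prod

lemma bernoulliSumPGF_cons (p : ℝ) (s : Multiset ℝ) :
    bernoulliSumPGF (p ::ₘ s) = (C p * X + C (1 - p)) * bernoulliSumPGF s := by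
  simp only [bernoulliSumPGF, Multiset.map_cons, Multiset.prod_cons]

lemma eval_one_bernoulliSumPGF (s : Multiset ℝ) : (bernoulliSumPGF s).eval 1 = 1 := by
  simp [bernoulliSumPGF, eval_multiset_prod]

lemma natDegree_bernoulliSumPGF_le (s : Multiset ℝ) :
    (bernoulliSumPGF s).natDegree ≤ s.card := by
  induction s using Multiset.induction_on with
  | empty => simp [bernoulliSumPGF]
  | cons p s ih =>
    rw [bernoulliSumPGF_cons, Multiset.card_cons, add_comm s.card]
    exact natDegree_mul_le.trans (add_le_add natDegree_linear_le ih)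

lemma coeff_bernoulliSumPGF_nonneg {s : Multiset ℝ} (hs : ∀ p ∈ s, p ∈ Set.Icc (0 : ℝ) 1) (k : ℕ) :
    0 ≤ (bernoulliSumPGF s).coeff k := by
  induction s using Multiset.induction_on generalizing k with
  | empty =>
    simp only [bernoulliSumPGF, Multiset.map_zero, Multiset.prod_zero, coeff_one]
    positivity
  | cons p s ih =>
    obtain ⟨⟨hp₀, hp₁⟩, hs⟩ := Multiset.forall_mem_cons.1 hs
    have hq₀ : 0 ≤ 1 - p := sub_nonneg.2 hp₁
    rw [bernoulliSumPGF_cons, add_mul, mul_assoc, coeff_add, coeff_C_mul, coeff_C_mul]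
    cases k with
    | zero => simpa using mul_nonneg hq₀ (ih hs 0)
    | succ k =>
      rw [coeff_X_mul]
      exact add_nonneg (mul_nonneg hp₀ (ih hs k)) (mul_nonneg hq₀ (ih hs (k + 1)))

lemma bernoulliSumPGF_eq_erase_sub {s : Multiset ℝ} {p : ℝ} (hp : p ∈ s) :
    bernoulliSumPGF s =
      bernoulliSumPGF (s.erase p) - C p * ((1 - X) * bernoulliSumPGF (s.erase p)) := by
  conv_lhs => rw [← Multiset.cons_erase hp, bernoulliSumPGF_cons]
  rw [C_sub, C_1]
  ring

lemma derivative_bernoulliSumPGF (s : Multiset ℝ) :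
    derivative (bernoulliSumPGF s) = C s.sum * bernoulliSumPGF s +
      (s.map fun p => C (p ^ 2) * ((1 - X) * bernoulliSumPGF (s.erase p))).sum := by
  have hterm : ∀ p ∈ s, bernoulliSumPGF (s.erase p) * derivative (C p * X + C (1 - p)) =
      C p * bernoulliSumPGF s + C (p ^ 2) * ((1 - X) * bernoulliSumPGF (s.erase p)) := by
    intro p hp
    rw [bernoulliSumPGF_eq_erase_sub hp]
    simp only [derivative_add, derivative_C_mul_X, derivative_C, C_pow]
    ring
  calc derivative (bernoulliSumPGF s)
      = (s.map fun p => bernoulliSumPGF (s.erase p) * derivative (C p * X + C (1 - p))).sum :=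
        derivative_prod
    _ = _ := by
        rw [Multiset.map_congr rfl hterm, Multiset.sum_map_add, Multiset.sum_map_mul_right,
          ← map_multiset_sum]

lemma coeff_one_sub_X_mul_zero {R : Type*} [Ring R] (f : R[X]) :
    ((1 - X) * f).coeff 0 = f.coeff 0 := by
  simp

lemma coeff_one_sub_X_mul_succ {R : Type*} [Ring R] (f : R[X]) (k : ℕ) :
    ((1 - X) * f).coeff (k + 1) = f.coeff (k + 1) - f.coeff k := by
  rw [sub_mul, one_mul, coeff_sub, coeff_X_mul]

lemma succ_mul_coeff_bernoulliSumPGF_succ (s : Multiset ℝ) (k : ℕ) :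
    ((k : ℝ) + 1) * (bernoulliSumPGF s).coeff (k + 1) = s.sum * (bernoulliSumPGF s).coeff k +
      (s.map fun p => p ^ 2 * ((1 - X) * bernoulliSumPGF (s.erase p)).coeff k).sum := by
  have hcoeff := congrArg (lcoeff ℝ k) (derivative_bernoulliSumPGF s)
  rw [map_add, map_multiset_sum (lcoeff ℝ k), Multiset.map_map] at hcoeff
  simp only [Function.comp_def, lcoeff_apply, coeff_derivative, coeff_C_mul] at hcoeff
  rw [mul_comm, hcoeff]

lemma coeff_bernoulliSumPGF_lt_succ_of_erase {s : Multiset ℝ} {k : ℕ} (hk : (k : ℝ) + 1 ≤ s.sum)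
    (hnonneg : 0 ≤ (bernoulliSumPGF s).coeff k)
    (herase : ∀ p ∈ s, 0 < ((1 - X) * bernoulliSumPGF (s.erase p)).coeff k) :
    (bernoulliSumPGF s).coeff k < (bernoulliSumPGF s).coeff (k + 1) := by
  obtain ⟨p, hp, hp₀⟩ : ∃ p ∈ s, p ≠ 0 := by
    by_contra! h
    have := Multiset.sum_eq_zero h
    linarith [k.cast_nonneg (α := ℝ)]
  have hsum : 0 < (s.map fun p =>
      p ^ 2 * ((1 - X) * bernoulliSumPGF (s.erase p)).coeff k).sum := by
    refine (mul_pos (by positivity) (herase p hp)).trans_le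
      (Multiset.single_le_sum ?_ _ (Multiset.mem_map_of_mem _ hp))
    intro x hx
    obtain ⟨q, hq, rfl⟩ := Multiset.mem_map.1 hx
    exact mul_nonneg (sq_nonneg q) (herase q hq).le
  nlinarith [succ_mul_coeff_bernoulliSumPGF_succ s k]

/-- Below its mean the distribution increases strictly on its support: the condition on differences
in `coeff_bernoulliSumPGF_lt_succ_of_erase` is again an increase below the mean, for one variable
fewer. -/
lemma coeff_bernoulliSumPGF_lt_succ {s : Multiset ℝ} (hs : ∀ p ∈ s, p ∈ Set.Icc (0 : ℝ) 1) {k : ℕ}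
    (hk : (k : ℝ) + 1 ≤ s.sum) (hpos : 0 < (bernoulliSumPGF s).coeff k) :
    (bernoulliSumPGF s).coeff k < (bernoulliSumPGF s).coeff (k + 1) := by
  induction hd : s.card generalizing s k with
  | zero =>
    rw [Multiset.card_eq_zero.1 hd, Multiset.sum_zero] at hk
    linarith [k.cast_nonneg (α := ℝ)]
  | succ d ih =>
    refine coeff_bernoulliSumPGF_lt_succ_of_erase hk hpos.le fun p hp => ?_
    have hs' : ∀ q ∈ s.erase p, q ∈ Set.Icc (0 : ℝ) 1 :=
      fun q hq => hs q (Multiset.mem_of_mem_erase hq)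
    rw [bernoulliSumPGF_eq_erase_sub hp, coeff_sub, coeff_C_mul] at hpos
    cases k with
    | zero =>
      rw [coeff_one_sub_X_mul_zero] at hpos ⊢
      refine (coeff_bernoulliSumPGF_nonneg hs' 0).lt_of_ne fun h => ?_
      simp [← h] at hpos
    | succ k =>
      rw [coeff_one_sub_X_mul_succ] at hpos ⊢
      rcases (coeff_bernoulliSumPGF_nonneg hs' k).eq_or_lt with h | h
      · rw [← h] at hpos ⊢
        nlinarith [(hs p hp).2, coeff_bernoulliSumPGF_nonneg hs' (k + 1)]
      · have hsum : p + (s.erase p).sum = s.sum := Multiset.sum_erase hp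
        push_cast at hk
        refine sub_pos.2 (ih hs' (by linarith [(hs p hp).2]) h ?_)
        rw [Multiset.card_erase_of_mem hp, hd, Nat.pred_succ]

lemma reflect_bernoulliSumPGF (s : Multiset ℝ) :
    reflect s.card (bernoulliSumPGF s) = bernoulliSumPGF (s.map (1 - ·)) := by
  induction s using Multiset.induction_on with
  | empty => simp [bernoulliSumPGF]
  | cons p s ih =>
    have hlin : reflect 1 (C p * X + C (1 - p)) = C (1 - p) * X + C (1 - (1 - p)) := by
      rw [reflect_add, reflect_C, ← pow_one (X : ℝ[X]), reflect_C_mul_X_pow, revAt_le le_rfl]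
      simp [add_comm]
    rw [Multiset.map_cons, bernoulliSumPGF_cons, bernoulliSumPGF_cons, Multiset.card_cons, add_comm,
      reflect_mul _ _ natDegree_linear_le (natDegree_bernoulliSumPGF_le s), hlin, ih]

lemma coeff_bernoulliSumPGF_succ_lt {s : Multiset ℝ} (hs : ∀ p ∈ s, p ∈ Set.Icc (0 : ℝ) 1) {k : ℕ}
    (hk : s.sum ≤ k) (hpos : 0 < (bernoulliSumPGF s).coeff (k + 1)) :
    (bernoulliSumPGF s).coeff (k + 1) < (bernoulliSumPGF s).coeff k := by
  have hcard : k + 1 ≤ s.card :=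
    (le_natDegree_of_ne_zero hpos.ne').trans (natDegree_bernoulliSumPGF_le s)
  obtain ⟨j, hj⟩ := Nat.exists_eq_add_of_le hcard
  have hcoeff (i : ℕ) (hi : i ≤ s.card) : (bernoulliSumPGF (s.map (1 - ·))).coeff i =
      (bernoulliSumPGF s).coeff (s.card - i) := by
    rw [← reflect_bernoulliSumPGF, coeff_reflect, revAt_le hi]
  have h₁ : (bernoulliSumPGF (s.map (1 - ·))).coeff j = (bernoulliSumPGF s).coeff (k + 1) := by
    rw [hcoeff j (by omega)]; congr 1; omega
  have h₂ : (bernoulliSumPGF (s.map (1 - ·))).coeff (j + 1) = (bernoulliSumPGF s).coeff k := by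
    rw [hcoeff (j + 1) (by omega)]; congr 1; omega
  rw [← h₁, ← h₂]
  refine coeff_bernoulliSumPGF_lt_succ ?_ ?_ (h₁ ▸ hpos)
  · intro q hq
    obtain ⟨p, hp, rfl⟩ := Multiset.mem_map.1 hq
    exact ⟨sub_nonneg.2 (hs p hp).2, sub_le_self _ (hs p hp).1⟩
  · have hcard' : (s.card : ℝ) = k + 1 + j := by exact_mod_cast hj
    rw [Multiset.sum_map_sub, Multiset.map_const', Multiset.sum_replicate, Multiset.map_id',
      nsmul_one]
    linarith

/-- Darroch's theorem. -/
theorem abs_mode_sub_mean_lt_one {s : Multiset ℝ} (hs : ∀ p ∈ s, p ∈ Set.Icc (0 : ℝ) 1) {m : ℕ}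
    (hm : ∀ j, (bernoulliSumPGF s).coeff j ≤ (bernoulliSumPGF s).coeff m) :
    |(m : ℝ) - s.sum| < 1 := by
  have hpos : 0 < (bernoulliSumPGF s).coeff m := by
    refine (coeff_bernoulliSumPGF_nonneg hs m).lt_of_ne fun h => ?_
    have hzero : bernoulliSumPGF s = 0 :=
      ext fun j => ((hm j).trans_eq h.symm).antisymm (coeff_bernoulliSumPGF_nonneg hs j)
    simpa [hzero] using eval_one_bernoulliSumPGF s
  rw [abs_lt]
  constructor <;> by_contra! hfar
  · exact (hm (m + 1)).not_gt (coeff_bernoulliSumPGF_lt_succ hs (by linarith) hpos)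
  · cases m with
    | zero =>
      have := Multiset.sum_nonneg fun p hp => (hs p hp).1
      norm_num at hfar
      linarith
    | succ k =>
      push_cast at hfar
      exact (hm k).not_gt (coeff_bernoulliSumPGF_succ_lt hs (by linarith) hpos)

end Darroch

section Burgers

open scoped PowerSeries

variable {R A : Type*} [CommSemiring R] [CommRing A] [Algebra R A] (D : Derivation R A A)

/-- The extension of a derivation of `A` to `A⟦X⟧` that acts on coefficients and kills `X`. -/
noncomputable def coeffwiseDerivation : Derivation R A⟦X⟧ A⟦X⟧ :=
  Derivation.mk'
    { toFun := fun F => PowerSeries.mk fun n => D (PowerSeries.coeff n F)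
      map_add' := fun F G => by ext; simp
      map_smul' := fun c F => by ext; simp }
    fun F G => by
      ext n
      rw [smul_eq_mul, smul_eq_mul, mul_comm G]
      simp [PowerSeries.coeff_mul, Finset.sum_add_distrib, mul_comm _ (D _)]

lemma coeff_coeffwiseDerivation (F : A⟦X⟧) (n : ℕ) :
    PowerSeries.coeff n (coeffwiseDerivation D F) = D (PowerSeries.coeff n F) := by
  simp [coeffwiseDerivation]

/-- The derivatives `∂ⁿF/∂zⁿ` at `z = 0` of the solution of the inviscid Burgers equation
`∂F/∂z = F * D F` with initial value `a`. -/
noncomputable def burgersSeq (a : A) : ℕ → A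
  | 0 => a
  | n + 1 => ∑ k : Fin (n + 1), n.choose k * (burgersSeq a (n - k) * D (burgersSeq a k))
decreasing_by all_goals omega

lemma burgersSeq_zero (a : A) : burgersSeq D a 0 = a := by
  rw [burgersSeq]

lemma burgersSeq_succ (a : A) (n : ℕ) : burgersSeq D a (n + 1) =
    ∑ k ∈ range (n + 1), n.choose k * (burgersSeq D a (n - k) * D (burgersSeq D a k)) := by
  rw [burgersSeq, Finset.sum_range]

variable {K : Type*} [Field K] [CharZero K] [Algebra K A]

/-- Lagrange inversion for the Burgers equation. The induction moves from `F ^ r` to `F ^ (r + 1)`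
because `(r + 1) * (F ^ r)' = r * D (F ^ (r + 1))`. -/
lemma factorial_mul_coeff_pow_of_burgers {D : Derivation K A A} {F : A⟦X⟧}
    (hF : PowerSeries.derivative A F = F * coeffwiseDerivation D F) (n r : ℕ) :
    ((n + r : ℕ) : A) * (n.factorial * PowerSeries.coeff n (F ^ r)) =
      r * D^[n] (PowerSeries.coeff 0 F ^ (n + r)) := by
  induction n generalizing r with
  | zero => simp
  | succ n ih =>
    have hpow : (((r + 1 : ℕ) : A⟦X⟧)) * PowerSeries.derivative A (F ^ r) =
        r * coeffwiseDerivation D (F ^ (r + 1)) := by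
      rw [PowerSeries.derivative_pow, Derivation.leibniz_pow, hF, add_tsub_cancel_right,
        nsmul_eq_mul, smul_eq_mul]
      cases r with
      | zero => simp
      | succ r => rw [add_tsub_cancel_right]; ring
    have hcoeff : ((r + 1 : ℕ) : A) * (PowerSeries.coeff (n + 1) (F ^ r) * (n + 1)) =
        r * D (PowerSeries.coeff n (F ^ (r + 1))) := by
      have := congrArg (PowerSeries.coeff n) hpow
      simpa only [← nsmul_eq_mul, map_nsmul, PowerSeries.coeff_derivative,
        coeff_coeffwiseDerivation] using this
    have hunit : IsUnit ((r + 1 : ℕ) : A) := by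
      rw [← map_natCast (algebraMap K A)]
      exact (Nat.cast_ne_zero.2 r.succ_ne_zero).isUnit.map _
    have hD := congrArg D (ih (r + 1))
    rw [← nsmul_eq_mul, ← nsmul_eq_mul, ← nsmul_eq_mul, map_nsmul, map_nsmul, map_nsmul,
      ← Function.iterate_succ_apply' D, nsmul_eq_mul, nsmul_eq_mul, nsmul_eq_mul] at hD
    refine hunit.mul_left_cancel ?_
    rw [show n + 1 + r = n + (r + 1) by ring, mul_left_comm _ (r : A), ← hD, Nat.factorial_succ]
    push_cast at hcoeff ⊢
    linear_combination ((n : A) + (r + 1)) * n.factorial * hcoeff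

theorem succ_mul_burgersSeq (D : Derivation K A A) (a : A) (n : ℕ) :
    ((n + 1 : ℕ) : A) * burgersSeq D a n = D^[n] (a ^ (n + 1)) := by
  set F : A⟦X⟧ := PowerSeries.mk fun k => (k.factorial : K)⁻¹ • burgersSeq D a k
  have hF : PowerSeries.derivative A F = F * coeffwiseDerivation D F := by
    ext n
    rw [PowerSeries.coeff_derivative, mul_comm F, PowerSeries.coeff_mul,
      Finset.Nat.sum_antidiagonal_eq_sum_range_succ fun i j =>
        PowerSeries.coeff i (coeffwiseDerivation D F) * PowerSeries.coeff j F]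
    simp only [F, PowerSeries.coeff_mk, coeff_coeffwiseDerivation, burgersSeq_succ,
      Derivation.map_smul, Finset.smul_sum, Finset.sum_mul]
    refine Finset.sum_congr rfl fun k hk => ?_
    have hk : k ≤ n := Nat.lt_succ_iff.1 (Finset.mem_range.1 hk)
    have hchoose : ((n + 1).factorial : K)⁻¹ * n.choose k * (n + 1) =
        (k.factorial : K)⁻¹ * ((n - k).factorial : K)⁻¹ := by
      rw [Nat.cast_choose K hk, Nat.factorial_succ]
      have := n.cast_add_one_ne_zero (R := K)
      have := n.factorial_ne_zero
      have := k.factorial_ne_zero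
      have := (n - k).factorial_ne_zero
      push_cast
      field_simp
    have hchoose' := congrArg (algebraMap K A) hchoose
    simp only [map_mul, map_add, map_natCast, map_one] at hchoose'
    simp only [Algebra.smul_def]
    linear_combination D (burgersSeq D a k) * burgersSeq D a (n - k) * hchoose'
  have h := factorial_mul_coeff_pow_of_burgers hF n 1
  have hcancel : (n.factorial : A) * PowerSeries.coeff n F = burgersSeq D a n := by
    rw [PowerSeries.coeff_mk, Algebra.smul_def, ← map_natCast (algebraMap K A), ← mul_assoc,
      ← map_mul, mul_inv_cancel₀ (Nat.cast_ne_zero.2 n.factorial_ne_zero), map_one, one_mul]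
  have hzero : PowerSeries.coeff 0 F = a := by
    simp [F, burgersSeq_zero]
  rwa [pow_one, hcancel, hzero, Nat.cast_one, one_mul] at h

end Burgers

section RealRooted

lemma splits_derivative {f : ℝ[X]} (hf : f.Splits) : (derivative f).Splits := by
  rw [splits_iff_card_roots] at hf ⊢
  have h₁ := card_roots_le_derivative f
  have h₂ := card_roots' (derivative f)
  have h₃ := natDegree_derivative f
  omega

lemma mem_of_mem_roots_derivative {f : ℝ[X]} (hf : f.Splits) {K : Set ℝ} (hK : Convex ℝ K)
    (hroots : ∀ x ∈ f.roots, x ∈ K) : ∀ x ∈ (derivative f).roots, x ∈ K := by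
  intro x hx
  have hdeg : 0 < f.natDegree := by
    by_contra! h
    rw [derivative_of_natDegree_zero (Nat.le_zero.1 h), roots_zero] at hx
    exact Multiset.notMem_zero x hx
  have hx' : (x : ℂ) ∈ (derivative (f.map Complex.ofRealHom)).rootSet ℂ := by
    rw [derivative_map, rootSet_def, Finset.mem_coe, Multiset.mem_toFinset, aroots_def,
      Algebra.algebraMap_self, Polynomial.map_id, (splits_derivative hf).roots_map]
    exact Multiset.mem_map_of_mem _ hx
  have hhull : convexHull ℝ ((f.map Complex.ofRealHom).rootSet ℂ) ⊆ Complex.reLm ⁻¹' K := by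
    refine convexHull_min (fun z hz => ?_) (hK.linear_preimage Complex.reLm)
    rw [rootSet_def, Finset.mem_coe, Multiset.mem_toFinset, aroots_def,
      Algebra.algebraMap_self, Polynomial.map_id, hf.roots_map] at hz
    obtain ⟨y, hy, rfl⟩ := Multiset.mem_map.1 hz
    exact hroots y hy
  refine hhull (rootSet_derivative_subset_convexHull_rootSet ?_ hx')
  rwa [degree_map, ← natDegree_pos_iff_degree_pos]

lemma natDegree_mul_sum_roots_derivative {f : ℝ[X]} (hf : f.Splits) :
    (f.natDegree : ℝ) * (derivative f).roots.sum = (f.natDegree - 1) * f.roots.sum := by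
  rcases hd : f.natDegree with _ | _ | d
  · rw [eq_C_of_natDegree_eq_zero hd]
    simp
  · rw [eq_C_of_natDegree_eq_zero (p := derivative f) (by rw [natDegree_derivative, hd])]
    simp
  · have hd' : (derivative f).natDegree = d + 1 := by rw [natDegree_derivative, hd]; rfl
    have hlead : f.coeff (d + 1 + 1) ≠ 0 := by
      rw [← hd, coeff_natDegree, leadingCoeff_ne_zero]
      rintro rfl
      simp at hd
    have h₁ := hf.nextCoeff_eq_neg_sum_roots_mul_leadingCoeff
    have h₂ := (splits_derivative hf).nextCoeff_eq_neg_sum_roots_mul_leadingCoeff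
    rw [nextCoeff_of_natDegree_pos (by omega), leadingCoeff, hd] at h₁
    rw [nextCoeff_of_natDegree_pos (by omega), leadingCoeff, hd', coeff_derivative,
      coeff_derivative] at h₂
    simp only [Nat.add_one_sub_one] at h₁ h₂
    refine mul_left_cancel₀ hlead ?_
    push_cast at h₂ ⊢
    linear_combination h₂ - ((d : ℝ) + 1) * h₁

/-- The derivation `X (1 + X) d/dX`. In the coordinate `q = t / (1 - t)`, it expresses how the
descents of a word change when two equal new maximal letters are inserted. -/
noncomputable def descentDerivation : Derivation ℝ ℝ[X] ℝ[X] :=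
  (X * (1 + X) : ℝ[X]) • derivative'

lemma descentDerivation_apply (f : ℝ[X]) :
    descentDerivation f = X * (1 + X) * derivative f := rfl

lemma natDegree_X_mul_one_add_X : (X * (1 + X) : ℝ[X]).natDegree = 2 := by
  compute_degree!

lemma natDegree_descentDerivation {f : ℝ[X]} (hf : f.natDegree ≠ 0) :
    (descentDerivation f).natDegree = f.natDegree + 1 := by
  have hf' : derivative f ≠ 0 := mt derivative_eq_zero.1 hf
  have hX : (X * (1 + X) : ℝ[X]) ≠ 0 := ne_zero_of_natDegree_gt (natDegree_X_mul_one_add_X.ge)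
  rw [descentDerivation_apply, natDegree_mul hX hf', natDegree_X_mul_one_add_X,
    natDegree_derivative]
  omega

lemma splits_descentDerivation {f : ℝ[X]} (hf : f.Splits) : (descentDerivation f).Splits := by
  rw [descentDerivation_apply, add_comm]
  exact (Splits.X.mul (Splits.X_add_C 1)).mul (splits_derivative hf)

lemma roots_descentDerivation {f : ℝ[X]} (hf : f.natDegree ≠ 0) :
    (descentDerivation f).roots = 0 ::ₘ -1 ::ₘ (derivative f).roots := by
  have hne : X * (1 + X) * derivative f ≠ 0 :=
    ne_zero_of_natDegree_gt (natDegree_descentDerivation hf).ge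
  rw [descentDerivation_apply, roots_mul hne, roots_mul (left_ne_zero_of_mul hne), roots_X,
    add_comm 1, ← C_1, roots_X_add_C, add_assoc, Multiset.singleton_add, Multiset.singleton_add]

lemma natDegree_iterate_descentDerivation {f : ℝ[X]} (hf : f.natDegree ≠ 0) (k : ℕ) :
    (descentDerivation^[k] f).natDegree = f.natDegree + k := by
  induction k with
  | zero => rfl
  | succ k ih =>
    rw [Function.iterate_succ_apply', natDegree_descentDerivation (by omega), ih, add_assoc]

lemma splits_iterate_descentDerivation {f : ℝ[X]} (hf : f.Splits) (k : ℕ) :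
    (descentDerivation^[k] f).Splits := by
  induction k with
  | zero => exact hf
  | succ k ih =>
    rw [Function.iterate_succ_apply']
    exact splits_descentDerivation ih

lemma mem_Icc_of_mem_roots_iterate_descentDerivation {f : ℝ[X]} (hf : f.Splits)
    (hdeg : f.natDegree ≠ 0) (hroots : ∀ x ∈ f.roots, x ∈ Set.Icc (-1 : ℝ) 0) (k : ℕ) :
    ∀ x ∈ (descentDerivation^[k] f).roots, x ∈ Set.Icc (-1 : ℝ) 0 := by
  induction k with
  | zero => exact hroots
  | succ k ih =>
    have hdeg' := natDegree_iterate_descentDerivation hdeg k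
    rw [Function.iterate_succ_apply', roots_descentDerivation (by omega)]
    simp only [Multiset.forall_mem_cons]
    exact ⟨by norm_num, by norm_num, mem_of_mem_roots_derivative
      (splits_iterate_descentDerivation hf k) (convex_Icc _ _) ih⟩

lemma sum_roots_iterate_descentDerivation {f : ℝ[X]} (hf : f.Splits) (hdeg : f.natDegree ≠ 0)
    (k : ℕ) : 2 * ((f.natDegree : ℝ) + k - 1) * (descentDerivation^[k] f).roots.sum =
      2 * (f.natDegree - 1) * f.roots.sum - k * (2 * f.natDegree + k - 1) := by
  induction k with
  | zero => simp
  | succ k ih =>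
    have hdeg' := natDegree_iterate_descentDerivation hdeg k
    have hderiv := natDegree_mul_sum_roots_derivative (splits_iterate_descentDerivation hf k)
    rw [hdeg'] at hderiv
    rw [Function.iterate_succ_apply', roots_descentDerivation (by omega), Multiset.sum_cons,
      Multiset.sum_cons]
    push_cast at hderiv ⊢
    linear_combination ih + 2 * hderiv

end RealRooted

section DescentWeight

/-- The weight of a word of length `m - 1` with `d` descents. In the coordinate `q = t / (1 - t)` it
is `t ^ d * (1 - t) ^ (-m)`. -/
noncomputable def descentWeight (m d : ℕ) : ℝ[X] := X ^ d * (1 + X) ^ (m - d)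

lemma descentWeight_mul {m m' d d' : ℕ} (hd : d ≤ m) (hd' : d' ≤ m') :
    descentWeight m d * descentWeight m' d' = descentWeight (m + m') (d + d') := by
  rw [descentWeight, descentWeight, descentWeight,
    show m + m' - (d + d') = (m - d) + (m' - d') by omega]
  ring

lemma descentDerivation_descentWeight {m d : ℕ} (hd : d ≤ m) :
    descentDerivation (descentWeight m d) =
      d * descentWeight (m + 1) d + (m - d) * descentWeight (m + 1) (d + 1) := by
  obtain ⟨e, rfl⟩ := Nat.exists_eq_add_of_le hd
  have hX : (X : ℝ[X]) * derivative (X ^ d) = (d : ℝ[X]) * X ^ d := by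
    cases d
    · simp
    · simp only [derivative_X_pow, C_eq_natCast, add_tsub_cancel_right]
      ring
  have hX' : (1 + X : ℝ[X]) * derivative ((1 + X) ^ e) = (e : ℝ[X]) * (1 + X) ^ e := by
    cases e
    · simp
    · simp only [derivative_pow, derivative_add, derivative_one, derivative_X, C_eq_natCast,
        add_tsub_cancel_right]
      ring
  simp only [descentDerivation_apply, descentWeight, derivative_mul, add_tsub_cancel_left,
    show d + e + 1 - d = e + 1 by omega, show d + e + 1 - (d + 1) = e by omega]
  push_cast
  linear_combination (1 + X) ^ (e + 1) * hX + X ^ (d + 1) * hX'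

/-- Undo the substitution `q = t / (1 - t)`: it turns the factor `q - x` into
`(1 - t)⁻¹ ((1 + x) t - x)`. -/
lemma sum_X_pow_eq_of_sum_descentWeight {ι : Type*} {t : Finset ι} {d : ι → ℕ} {r : Multiset ℝ}
    {c : ℝ} (hd : ∀ i ∈ t, d i ≤ r.card)
    (h : ∑ i ∈ t, descentWeight r.card (d i) = C c * (r.map fun x => X - C x).prod) :
    ∑ i ∈ t, X ^ d i = C c * bernoulliSumPGF (r.map (1 + ·)) := by
  refine eq_of_infinite_eval_eq _ _ ((Set.finite_singleton (1 : ℝ)).infinite_compl.mono ?_)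
  intro y hy
  have hy' : 1 - y ≠ 0 := sub_ne_zero.2 (Ne.symm hy)
  have hweight : ∀ i ∈ t, (1 - y) ^ r.card *
      (descentWeight r.card (d i)).eval (y / (1 - y)) = y ^ d i := by
    intro i hi
    have hone : 1 + y / (1 - y) = (1 - y)⁻¹ := by field_simp; ring
    have hpow : (1 - y) ^ r.card = (1 - y) ^ d i * (1 - y) ^ (r.card - d i) := by
      rw [← pow_add, Nat.add_sub_cancel' (hd i hi)]
    simp only [descentWeight, eval_mul, eval_pow, eval_add, eval_one, eval_X, hone, hpow, div_pow,
      inv_pow]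
    field_simp
  have hfactor : ∀ x ∈ r, (1 - y) * (y / (1 - y) - x) = (1 + x) * y + (1 - (1 + x)) := by
    intro x _
    field_simp
    ring
  have heval := congrArg (fun f => (1 - y) ^ r.card * f.eval (y / (1 - y))) h
  simp only [eval_finsetSum, Finset.mul_sum, eval_mul, eval_C, eval_multiset_prod,
    Multiset.map_map, Function.comp_def, eval_sub, eval_X] at heval
  rw [Finset.sum_congr rfl hweight, mul_left_comm, ← Multiset.prod_replicate,
    ← Multiset.map_const', ← Multiset.prod_map_mul, Multiset.map_congr rfl hfactor] at heval
  simpa [bernoulliSumPGF, eval_finsetSum, eval_multiset_prod, Multiset.map_map,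
    Function.comp_def] using heval

end DescentWeight

section Noncrossing

variable {α : Type*} {u v x z w w' : List α} {a M : α}

/-- A word is noncrossing if it has no subword `abab` with `a ≠ b`. -/
def Noncrossing (w : List α) : Prop := ∀ a b, [a, b, a, b] <+ w → a = b

lemma Noncrossing.sublist (hw : Noncrossing w) (h : w' <+ w) : Noncrossing w' :=
  fun a b hab => hw a b (hab.trans h)

lemma cons_sublist_of_cons_sublist_append (h : a :: w <+ u ++ x) (ha : a ∉ u) : a :: w <+ x := by
  induction u with
  | nil => exact h
  | cons b u ih =>
    rw [List.mem_cons, not_or] at ha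
    exact ih (h.of_cons_of_ne ha.1) ha.2

lemma concat_sublist_of_concat_sublist_append (h : w ++ [a] <+ u ++ x) (ha : a ∉ x) :
    w ++ [a] <+ u := by
  rw [← List.reverse_sublist, List.reverse_append, List.reverse_append, List.reverse_singleton,
    List.singleton_append] at h
  rw [← List.reverse_sublist, List.reverse_append, List.reverse_singleton, List.singleton_append]
  exact cons_sublist_of_cons_sublist_append h (by rwa [List.mem_reverse])

lemma Noncrossing.insert (hux : Noncrossing (u ++ x)) (hz : Noncrossing z)
    (hdisj : List.Disjoint z (u ++ x)) : Noncrossing (u ++ (z ++ x)) := by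
  intro a b hab
  simp only [List.disjoint_append_right] at hdisj
  by_cases hb : b ∈ z
  · have hbab : [b, a, b] <+ z :=
      concat_sublist_of_concat_sublist_append (w := [b, a])
        (cons_sublist_of_cons_sublist_append ((List.sublist_cons_self a _).trans hab)
          (hdisj.1 hb)) (hdisj.2 hb)
    have ha : a ∈ z := hbab.subset (by simp)
    exact hz a b (concat_sublist_of_concat_sublist_append (w := [a, b, a])
      (cons_sublist_of_cons_sublist_append hab (hdisj.1 ha)) (hdisj.2 hb))
  · by_cases ha : a ∈ z
    · have haba : [a, b, a] <+ z :=
        concat_sublist_of_concat_sublist_append (w := [a, b])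
          (cons_sublist_of_cons_sublist_append
            ((List.sublist_append_left [a, b, a] [b]).trans hab) (hdisj.1 ha)) (hdisj.2 ha)
      exact absurd (haba.subset (by simp)) hb
    · have hfilter := hab.filter (· ∉ z)
      have hz' : z.filter (· ∉ z) = [] := by simp
      rw [List.filter_eq_self.2 (by simp [ha, hb]), List.filter_append, List.filter_append, hz',
        List.nil_append] at hfilter
      exact hux a b (hfilter.trans (List.filter_sublist.append List.filter_sublist))

lemma Noncrossing.wrap (hv : Noncrossing v) (hM : M ∉ v) :
    Noncrossing (M :: (v ++ [M])) := by
  intro a b hab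
  by_contra hne
  by_cases hb : b = M
  · subst hb
    have hbab : [b, a, b] <+ [b] :=
      cons_sublist_of_cons_sublist_append
        ((List.sublist_cons_self a _).trans (hab.of_cons_of_ne hne)) hM
    simpa using hbab.length_le
  · have hb' : b ∉ [M] := by simpa using hb
    by_cases ha : a = M
    · subst ha
      have hbab : [b, a, b] <+ v :=
        concat_sublist_of_concat_sublist_append (w := [b, a])
          (List.cons_sublist_cons.1 hab) hb'
      exact hM (hbab.subset (by simp))
    · exact hne (hv a b (concat_sublist_of_concat_sublist_append (w := [a, b, a])
        (hab.of_cons_of_ne ha) hb'))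

lemma noncrossing_append_cons_append_cons (hMu : M ∉ u) (hMv : M ∉ v) (hMx : M ∉ x) :
    Noncrossing (u ++ M :: (v ++ M :: x)) ↔
      Noncrossing (u ++ x) ∧ Noncrossing v ∧ List.Disjoint v (u ++ x) := by
  have heq : u ++ M :: (v ++ M :: x) = u ++ (M :: (v ++ [M]) ++ x) := by simp
  constructor
  · intro h
    have hux : u ++ x <+ u ++ M :: (v ++ M :: x) := by
      rw [heq]
      exact (List.Sublist.refl u).append (List.sublist_append_right _ _)
    have hv : v <+ u ++ M :: (v ++ M :: x) :=
      (List.sublist_append_left v _).trans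
        ((List.sublist_cons_self M _).trans (List.sublist_append_right u _))
    refine ⟨h.sublist hux, h.sublist hv, fun a hav hax => ?_⟩
    have hne : a ≠ M := fun h => hMv (h ▸ hav)
    rcases List.mem_append.1 hax with hau | hax
    · have haMaM : [a, M, a, M] <+ u ++ M :: (v ++ M :: x) :=
        (List.singleton_sublist.2 hau).append (((List.singleton_sublist.2 hav).append
          (List.singleton_sublist.2 List.mem_cons_self)).cons_cons M)
      exact hne (h a M haMaM)
    · have hMaMa : [M, a, M, a] <+ u ++ M :: (v ++ M :: x) :=
        (((List.singleton_sublist.2 hav).append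
          ((List.singleton_sublist.2 hax).cons_cons M)).cons_cons M).trans
          (List.sublist_append_right u _)
      exact hne (h M a hMaMa).symm
  · rintro ⟨hux, hv, hdisj⟩
    rw [heq]
    refine hux.insert (hv.wrap hMv) ?_
    simp only [List.disjoint_cons_left, List.disjoint_append_left, List.mem_append]
    tauto

end Noncrossing

section QuasiStirling

variable {α : Type*} [DecidableEq α]

/-- A word in which every letter that occurs does so exactly twice, without crossings. -/
def IsQuasiStirling (w : List α) : Prop := (∀ a ∈ w, w.count a = 2) ∧ Noncrossing w

lemma isQuasiStirling_append_cons_append_cons {u v x : List α} {M : α} (hMu : M ∉ u) (hMv : M ∉ v)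
    (hMx : M ∉ x) : IsQuasiStirling (u ++ M :: (v ++ M :: x)) ↔
      IsQuasiStirling (u ++ x) ∧ IsQuasiStirling v ∧ List.Disjoint v (u ++ x) := by
  have hM : (u ++ M :: (v ++ M :: x)).count M = 2 := by
    simp [List.count_eq_zero_of_not_mem, hMu, hMv, hMx]
  have hcount {a : α} (ha : a ≠ M) :
      (u ++ M :: (v ++ M :: x)).count a = (u ++ x).count a + v.count a := by
    simp only [List.count_append, List.count_cons_of_ne ha.symm]
    ring
  have hne {a : α} (ha : a ∈ u ++ x ∨ a ∈ v) : a ≠ M := by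
    rintro rfl
    simp_all
  rw [IsQuasiStirling, IsQuasiStirling, IsQuasiStirling,
    noncrossing_append_cons_append_cons hMu hMv hMx]
  constructor
  · rintro ⟨htwo, hux, hv, hdisj⟩
    refine ⟨⟨fun a ha => ?_, hux⟩, ⟨fun a ha => ?_, hv⟩, hdisj⟩
    · have := htwo a (by simp only [List.mem_append, List.mem_cons] at ha ⊢; tauto)
      rwa [hcount (hne (.inl ha)), List.count_eq_zero_of_not_mem fun hav => hdisj hav ha] at this
    · have := htwo a (by simp [ha])
      rwa [hcount (hne (.inr ha)), List.count_eq_zero_of_not_mem (hdisj ha), zero_add] at this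
  · rintro ⟨⟨hux₂, hux⟩, ⟨hv₂, hv⟩, hdisj⟩
    refine ⟨fun a ha => ?_, hux, hv, hdisj⟩
    by_cases haM : a = M
    · rw [haM, hM]
    rw [hcount haM]
    by_cases hav : a ∈ v
    · rw [hv₂ a hav, List.count_eq_zero_of_not_mem (hdisj hav)]
    · have hax : a ∈ u ++ x := by
        simp only [List.mem_append, List.mem_cons] at ha ⊢
        tauto
      rw [hux₂ a hax, List.count_eq_zero_of_not_mem hav]

/-- The quasi-Stirling words whose set of letters is `S`. -/
noncomputable def quasiStirlingWords (S : Finset α) : Finset (List α) :=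
  (2 • S.val).lists.toFinset.filter Noncrossing

lemma mem_quasiStirlingWords {S : Finset α} {w : List α} :
    w ∈ quasiStirlingWords S ↔ IsQuasiStirling w ∧ w.toFinset = S := by
  have hperm : 2 • S.val = w ↔ (∀ a ∈ w, w.count a = 2) ∧ w.toFinset = S := by
    have hcount (a : α) : (2 • S.val).count a = if a ∈ S then 2 else 0 := by
      rw [Multiset.count_nsmul, Multiset.count_eq_of_nodup S.nodup, mul_ite]
      rfl
    simp only [Multiset.ext, hcount, Multiset.coe_count, Finset.ext_iff, List.mem_toFinset]
    constructor
    · intro h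
      have hmem (a : α) : a ∈ w ↔ a ∈ S := by
        rw [← List.count_pos_iff, ← h]
        split_ifs with ha <;> simp [ha]
      exact ⟨fun a ha => by rw [← h, if_pos ((hmem a).1 ha)], hmem⟩
    · rintro ⟨h₂, hmem⟩ a
      split_ifs with ha
      · exact (h₂ a ((hmem a).2 ha)).symm
      · exact (List.count_eq_zero_of_not_mem (mt (hmem a).1 ha)).symm
  rw [quasiStirlingWords, Finset.mem_filter, Multiset.mem_toFinset, Multiset.mem_lists_iff,
    Multiset.quot_mk_to_coe, hperm, IsQuasiStirling]
  tauto

lemma length_of_mem_quasiStirlingWords {S : Finset α} {w : List α} (hw : w ∈ quasiStirlingWords S) :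
    w.length = 2 * S.card := by
  rw [quasiStirlingWords, Finset.mem_filter, Multiset.mem_toFinset, Multiset.mem_lists_iff] at hw
  simpa using (congrArg Multiset.card hw.1).symm

lemma quasiStirlingWords_empty : quasiStirlingWords (∅ : Finset α) = {[]} := by
  ext w
  rw [mem_quasiStirlingWords, List.toFinset_eq_empty_iff, Finset.mem_singleton]
  refine ⟨And.right, ?_⟩
  rintro rfl
  exact ⟨⟨by simp, fun a b h => by simpa using h.length_le⟩, rfl⟩

end QuasiStirling

section Descents

variable {α : Type*} [LinearOrder α]

/-- The number of descents of a word, the last position of a nonempty word counting as one. -/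
def descents : List α → ℕ
  | [] => 0
  | [_] => 1
  | a :: b :: w => (if b < a then 1 else 0) + descents (b :: w)

lemma descents_le_length (w : List α) : descents w ≤ w.length := by
  induction w using descents.induct with
  | case1 => rfl
  | case2 => rfl
  | case3 a b w ih =>
    rw [descents, List.length_cons]
    split_ifs <;> omega

lemma descents_append_cons (u : List α) (a : α) (x : List α) :
    descents (u ++ a :: x) + 1 = descents (u ++ [a]) + descents (a :: x) := by
  induction u using descents.induct with
  | case1 => exact add_comm _ _
  | case2 b =>
    simp only [List.cons_append, List.nil_append, descents]
    ring
  | case3 b c u ih =>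
    simp only [List.cons_append, descents] at ih ⊢
    omega

variable {M : α}

lemma descents_concat_of_forall_lt {v : List α} (hv : ∀ a ∈ v, a < M) (hne : v ≠ []) :
    descents (v ++ [M]) = descents v := by
  induction v using descents.induct with
  | case1 => exact absurd rfl hne
  | case2 a => simp [descents, (hv a List.mem_cons_self).not_gt]
  | case3 a b v ih =>
    have ih := ih (fun c hc => hv c (List.mem_cons_of_mem a hc)) (List.cons_ne_nil b v)
    simp only [List.cons_append, descents] at ih ⊢
    rw [ih]

lemma descents_append_cons_append_cons {v : List α} (hv : ∀ a ∈ v, a < M) (u x : List α) :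
    descents (u ++ M :: (v ++ M :: x)) = descents (u ++ M :: x) + descents v := by
  have hwrap : descents (M :: v ++ [M]) = descents v + 1 := by
    cases v with
    | nil => simp [descents]
    | cons b v =>
      have hconcat := descents_concat_of_forall_lt hv (List.cons_ne_nil b v)
      simp only [List.cons_append, descents, if_pos (hv b List.mem_cons_self)] at hconcat ⊢
      rw [hconcat, add_comm]
  have h₁ := descents_append_cons u M (v ++ M :: x)
  have h₂ := descents_append_cons (M :: v) M x
  have h₃ := descents_append_cons u M x
  rw [List.cons_append] at h₂
  omega

/-- Inserting a new maximal letter in front of a letter or at the end creates a descent unless the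
slot was already a descent. -/
lemma sum_descents_insert {R : Type*} [CommRing R] {y : List α} (hy : ∀ a ∈ y, a < M)
    (g : ℕ → R) :
    ∑ i ∈ range (y.length + 1), g (descents (y.take i ++ M :: y.drop i)) =
      descents y * g (descents y) + (y.length + 1 - descents y) * g (descents y + 1) := by
  induction y using descents.induct generalizing g with
  | case1 => simp [descents]
  | case2 a =>
    have haM := hy a List.mem_cons_self
    simp [Finset.sum_range_succ, descents, haM, haM.not_gt, add_comm]
  | case3 a b y ih =>
    have hby : ∀ c ∈ b :: y, c < M := fun c hc => hy c (List.mem_cons_of_mem a hc)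
    have ih := ih hby fun d => g ((if b < a then 1 else 0) + d)
    rw [List.length_cons, Finset.sum_range_succ'] at ih ⊢
    rw [Finset.sum_range_succ']
    have hbM : b < M := hby b List.mem_cons_self
    have haM : a < M := hy a List.mem_cons_self
    by_cases hba : b < a
    all_goals
      simp only [List.take_succ_cons, List.drop_succ_cons, List.take_zero, List.drop_zero,
        List.nil_append, List.cons_append, descents, List.length_cons, hba, hbM, haM, haM.not_gt,
        if_true, if_false, zero_add, add_comm 1] at ih ⊢
      push_cast at ih ⊢
      linear_combination ih

end Descents

section Recursion

variable {α : Type*}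

lemma append_cons_inj_of_notMem {p p' r r' : List α} {M : α} (hp : M ∉ p) (hp' : M ∉ p') :
    p ++ M :: r = p' ++ M :: r' ↔ p = p' ∧ r = r' := by
  induction p generalizing p' with
  | nil => cases p' <;> grind
  | cons a p ih => cases p' <;> grind

lemma append_cons_append_cons_inj {v v' y y' : List α} {M : α} {i i' : ℕ} (hy : M ∉ y)
    (hy' : M ∉ y') (hv : M ∉ v) (hv' : M ∉ v') (hi : i ≤ y.length) (hi' : i' ≤ y'.length)
    (h : y.take i ++ M :: (v ++ M :: y.drop i) = y'.take i' ++ M :: (v' ++ M :: y'.drop i')) :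
    v = v' ∧ y = y' ∧ i = i' := by
  rw [append_cons_inj_of_notMem (mt List.mem_of_mem_take hy) (mt List.mem_of_mem_take hy'),
    append_cons_inj_of_notMem hv hv'] at h
  obtain ⟨htake, rfl, hdrop⟩ := h
  refine ⟨rfl, ?_, ?_⟩
  · rw [← List.take_append_drop i y, htake, hdrop, List.take_append_drop]
  · simpa [hi, hi'] using congrArg List.length htake

variable [DecidableEq α]

lemma exists_eq_append_cons_append_cons {w : List α} {M : α} (h : w.count M = 2) :
    ∃ u v x, M ∉ u ∧ M ∉ v ∧ M ∉ x ∧ w = u ++ M :: (v ++ M :: x) := by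
  obtain ⟨u, r, rfl, hu⟩ := List.eq_append_cons_of_mem (List.count_pos_iff.1 (h ▸ two_pos))
  rw [List.count_append, List.count_cons_self, List.count_eq_zero_of_not_mem hu] at h
  have hr : r.count M = 1 := by omega
  obtain ⟨v, x, rfl, hv⟩ := List.eq_append_cons_of_mem (List.count_pos_iff.1 (hr ▸ one_pos))
  rw [List.count_append, List.count_cons_self, List.count_eq_zero_of_not_mem hv] at hr
  exact ⟨u, v, x, hu, hv, List.count_eq_zero.1 (by omega), rfl⟩

variable {S : Finset α} {M : α}

lemma append_cons_append_cons_mem_quasiStirlingWords {u v x : List α} (hMS : M ∉ S) (hMu : M ∉ u)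
    (hMv : M ∉ v) (hMx : M ∉ x) :
    u ++ M :: (v ++ M :: x) ∈ quasiStirlingWords (insert M S) ↔
      ∃ T ⊆ S, v ∈ quasiStirlingWords (S \ T) ∧ u ++ x ∈ quasiStirlingWords T := by
  simp only [mem_quasiStirlingWords, isQuasiStirling_append_cons_append_cons hMu hMv hMx]
  constructor
  · rintro ⟨⟨hux, hv, hdisj⟩, hS⟩
    have hmem (a : α) : a ∈ S ↔ a ∈ v ∨ a ∈ u ++ x := by
      have := Finset.ext_iff.1 hS a
      simp only [List.mem_toFinset, List.mem_append, List.mem_cons, Finset.mem_insert] at this ⊢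
      by_cases ha : a = M
      · subst ha
        tauto
      · tauto
    refine ⟨(u ++ x).toFinset, fun a ha => (hmem a).2 (.inr (List.mem_toFinset.1 ha)),
      ⟨hv, ?_⟩, hux, rfl⟩
    ext a
    rw [Finset.mem_sdiff, hmem, List.mem_toFinset, List.mem_toFinset]
    exact ⟨fun ha => ⟨.inl ha, hdisj ha⟩, fun ha => ha.1.resolve_right ha.2⟩
  · rintro ⟨T, hT, ⟨hv, hvT⟩, hux, rfl⟩
    have hmem (a : α) : a ∈ v ↔ a ∈ S ∧ a ∉ u ++ x := by
      rw [← List.mem_toFinset, hvT, Finset.mem_sdiff, List.mem_toFinset]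
    refine ⟨⟨hux, hv, fun a hav => ((hmem a).1 hav).2⟩, ?_⟩
    ext a
    have hTa : a ∈ u ++ x → a ∈ S := fun ha => hT (List.mem_toFinset.2 ha)
    have := hmem a
    simp only [List.mem_toFinset, List.mem_append, List.mem_cons, Finset.mem_insert] at *
    tauto

lemma notMem_of_mem_quasiStirlingWords {T : Finset α} {w : List α} (hMS : M ∉ S) (hT : T ⊆ S)
    (hw : w ∈ quasiStirlingWords T) : M ∉ w :=
  fun hM => hMS (hT ((mem_quasiStirlingWords.1 hw).2 ▸ List.mem_toFinset.2 hM))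

/-- A quasi-Stirling word decomposes around the two occurrences of `M` as `u M v M x`, where `v` and
`u x` are quasi-Stirling words on complementary alphabets. -/
lemma sum_quasiStirlingWords_insert {β : Type*} [AddCommMonoid β] (hMS : M ∉ S) (f : List α → β) :
    ∑ w ∈ quasiStirlingWords (insert M S), f w =
      ∑ T ∈ S.powerset, ∑ v ∈ quasiStirlingWords (S \ T), ∑ y ∈ quasiStirlingWords T,
        ∑ i ∈ range (y.length + 1), f (y.take i ++ M :: (v ++ M :: y.drop i)) := by
  simp only [Finset.sum_sigma']
  symm
  refine Finset.sum_bij (fun t _ => t.2.2.1.take t.2.2.2 ++ M :: (t.2.1 ++ M ::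
    t.2.2.1.drop t.2.2.2)) ?_ ?_ ?_ fun _ _ => rfl
  · rintro ⟨T, v, y, i⟩ ht
    simp only [Finset.mem_sigma, Finset.mem_powerset] at ht
    obtain ⟨hT, hv, hy, -⟩ := ht
    have hMy := notMem_of_mem_quasiStirlingWords hMS hT hy
    rw [append_cons_append_cons_mem_quasiStirlingWords hMS (mt List.mem_of_mem_take hMy)
      (notMem_of_mem_quasiStirlingWords hMS Finset.sdiff_subset hv)
      (mt List.mem_of_mem_drop hMy), List.take_append_drop]
    exact ⟨T, hT, hv, hy⟩
  · rintro ⟨T, v, y, i⟩ ht ⟨T', v', y', i'⟩ ht' heq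
    simp only [Finset.mem_sigma, Finset.mem_powerset, Finset.mem_range, Nat.lt_succ_iff] at ht ht'
    obtain ⟨rfl, rfl, rfl⟩ := append_cons_append_cons_inj
      (notMem_of_mem_quasiStirlingWords hMS ht.1 ht.2.2.1)
      (notMem_of_mem_quasiStirlingWords hMS ht'.1 ht'.2.2.1)
      (notMem_of_mem_quasiStirlingWords hMS Finset.sdiff_subset ht.2.1)
      (notMem_of_mem_quasiStirlingWords hMS Finset.sdiff_subset ht'.2.1) ht.2.2.2 ht'.2.2.2 heq
    obtain rfl : T = T' := by
      rw [← (mem_quasiStirlingWords.1 ht.2.2.1).2, (mem_quasiStirlingWords.1 ht'.2.2.1).2]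
    rfl
  · intro w hw
    obtain ⟨hw₂, hwS⟩ := mem_quasiStirlingWords.1 hw
    have hMw : M ∈ w := List.mem_toFinset.1 (hwS ▸ Finset.mem_insert_self M S)
    obtain ⟨u, v, x, hMu, hMv, hMx, rfl⟩ := exists_eq_append_cons_append_cons (hw₂.1 M hMw)
    obtain ⟨T, hT, hv, hux⟩ :=
      (append_cons_append_cons_mem_quasiStirlingWords hMS hMu hMv hMx).1 hw
    refine ⟨⟨T, v, u ++ x, u.length⟩, ?_, by simp⟩
    simp only [Finset.mem_sigma, Finset.mem_powerset, Finset.mem_range, List.length_append]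
    exact ⟨hT, hv, hux, by omega⟩

end Recursion

section WordWeight

variable {α : Type*} [LinearOrder α]

/-- The weight `q ^ d (1 + q) ^ (ℓ + 1 - d)` of a word of length `ℓ` with `d` descents. -/
noncomputable def wordWeight (w : List α) : ℝ[X] := descentWeight (w.length + 1) (descents w)

lemma sum_wordWeight_insert {M : α} {y v : List α} (hy : ∀ a ∈ y, a < M) (hv : ∀ a ∈ v, a < M) :
    ∑ i ∈ range (y.length + 1), wordWeight (y.take i ++ M :: (v ++ M :: y.drop i)) =
      wordWeight v * descentDerivation (wordWeight y) := by
  have hdy : descents y ≤ y.length + 1 := (descents_le_length y).trans (Nat.le_succ _)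
  have hdv : descents v ≤ v.length + 1 := (descents_le_length v).trans (Nat.le_succ _)
  have hterm (i : ℕ) : wordWeight (y.take i ++ M :: (v ++ M :: y.drop i)) =
      wordWeight v *
        descentWeight (y.length + 1 + 1) (descents (y.take i ++ M :: y.drop i)) := by
    have hd := descents_le_length (y.take i ++ M :: y.drop i)
    have hlen : (y.take i).length + (y.drop i).length = y.length := by
      rw [← List.length_append, List.take_append_drop]
    simp only [List.length_append, List.length_cons] at hd
    rw [wordWeight, wordWeight, descentWeight_mul hdv (by omega),
      descents_append_cons_append_cons hv, add_comm (descents v)]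
    congr 1
    simp only [List.length_append, List.length_cons]
    omega
  simp only [hterm, ← Finset.mul_sum]
  rw [sum_descents_insert hy (descentWeight _), wordWeight, wordWeight,
    descentDerivation_descentWeight hdy]
  push_cast
  rfl

lemma sum_wordWeight_quasiStirlingWords_insert {S : Finset α} {M : α} (hM : ∀ a ∈ S, a < M) :
    ∑ w ∈ quasiStirlingWords (insert M S), wordWeight w =
      ∑ T ∈ S.powerset, (∑ v ∈ quasiStirlingWords (S \ T), wordWeight v) *
        descentDerivation (∑ y ∈ quasiStirlingWords T, wordWeight y) := by
  have hlt {T : Finset α} {w : List α} (hT : T ⊆ S) (hw : w ∈ quasiStirlingWords T) :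
      ∀ a ∈ w, a < M :=
    fun a ha => hM a (hT ((mem_quasiStirlingWords.1 hw).2 ▸ List.mem_toFinset.2 ha))
  rw [sum_quasiStirlingWords_insert fun h => (hM M h).false]
  refine Finset.sum_congr rfl fun T hT => ?_
  rw [map_sum, Finset.sum_mul_sum]
  exact Finset.sum_congr rfl fun v hv => Finset.sum_congr rfl fun y hy =>
    sum_wordWeight_insert (hlt (Finset.mem_powerset.1 hT) hy) (hlt Finset.sdiff_subset hv)

theorem sum_wordWeight_quasiStirlingWords (S : Finset α) :
    ∑ w ∈ quasiStirlingWords S, wordWeight w = burgersSeq descentDerivation (1 + X) S.card := by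
  induction S using Finset.strongInduction with
  | H S ih =>
    rcases S.eq_empty_or_nonempty with rfl | hS
    · rw [quasiStirlingWords_empty, Finset.sum_singleton, Finset.card_empty, burgersSeq_zero,
        wordWeight, descentWeight, descents, List.length_nil, pow_zero, one_mul, pow_one]
    · set S' := S.erase (S.max' hS)
      have hSS' : S = insert (S.max' hS) S' := (Finset.insert_erase (S.max'_mem hS)).symm
      have hcard : S.card = S'.card + 1 := (Finset.card_erase_add_one (S.max'_mem hS)).symm
      have hlt : ∀ a ∈ S', a < S.max' hS := fun a ha => S.lt_max'_of_mem_erase_max' hS ha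
      have hsub {T : Finset α} (hT : T ⊆ S') : T ⊂ S :=
        hT.trans_ssubset (Finset.erase_ssubset (S.max'_mem hS))
      have hterm : ∀ T ∈ S'.powerset, (∑ v ∈ quasiStirlingWords (S' \ T), wordWeight v) *
          descentDerivation (∑ y ∈ quasiStirlingWords T, wordWeight y) =
            burgersSeq descentDerivation (1 + X) (S'.card - T.card) *
              descentDerivation (burgersSeq descentDerivation (1 + X) T.card) := by
        intro T hT
        rw [Finset.mem_powerset] at hT
        rw [ih _ (hsub Finset.sdiff_subset), ih _ (hsub hT), Finset.card_sdiff_of_subset hT]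
      rw [hcard, burgersSeq_succ, hSS', sum_wordWeight_quasiStirlingWords_insert hlt,
        Finset.sum_congr rfl hterm,
        Finset.sum_powerset_apply_card fun k => burgersSeq descentDerivation (1 + X)
          (S'.card - k) * descentDerivation (burgersSeq descentDerivation (1 + X) k)]
      simp only [nsmul_eq_mul]

end WordWeight

section Words

variable {α : Type*}

lemma desW_succ [LinearOrder α] {N : ℕ} (w : Fin (N + 2) → α) :
    desW w = (if w 1 < w 0 then 1 else 0) + desW fun i : Fin (N + 1) => w i.succ := by
  rw [desW, desW, Fin.card_filter_univ_succ]
  have hzero : (((0 : Fin (N + 2)) : ℕ) + 1 = N + 2 ∨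
      ∃ h : ((0 : Fin (N + 2)) : ℕ) + 1 < N + 2, w ⟨((0 : Fin (N + 2)) : ℕ) + 1, h⟩ < w 0) ↔
        w 1 < w 0 := by
    simp
  have hsucc (i : Fin (N + 1)) : ((i.succ : ℕ) + 1 = N + 2 ∨
      ∃ h : (i.succ : ℕ) + 1 < N + 2, w ⟨(i.succ : ℕ) + 1, h⟩ < w i.succ) ↔
        ((i : ℕ) + 1 = N + 1 ∨
          ∃ h : (i : ℕ) + 1 < N + 1, w (Fin.succ ⟨(i : ℕ) + 1, h⟩) < w i.succ) := by
    simp only [Fin.val_succ, Fin.succ_mk, Nat.add_right_cancel_iff, Nat.add_lt_add_iff_right]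
  simp only [hzero, hsucc]
  split_ifs
  · rw [add_comm]
  · rw [zero_add]

lemma descents_ofFn [LinearOrder α] {N : ℕ} (w : Fin N → α) : descents (List.ofFn w) = desW w := by
  induction N with
  | zero => simp [descents, desW]
  | succ N ih =>
    cases N with
    | zero => rw [desW, Finset.filter_true_of_mem fun i _ => .inl (by omega)]; rfl
    | succ N =>
      have ih := ih fun i => w i.succ
      rw [List.ofFn_succ] at ih
      rw [List.ofFn_succ, List.ofFn_succ, descents, ih, desW_succ, Fin.succ_zero_eq_one]

lemma sublist_finRange_iff {N : ℕ} {l : List (Fin N)} :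
    l <+ List.finRange N ↔ l.Pairwise (· < ·) := by
  refine ⟨fun h => (List.pairwise_lt_finRange N).sublist h, fun hl => ?_⟩
  exact List.sublist_of_subperm_of_pairwise
    (List.subperm_of_subset (hl.imp ne_of_lt) fun i _ => List.mem_finRange i) hl
    (List.pairwise_lt_finRange N)

lemma noncrossing_ofFn_iff {N : ℕ} (w : Fin N → α) : Noncrossing (List.ofFn w) ↔
    ∀ i j l p : Fin N, i < j → j < l → l < p → w i = w l → w j = w p → w i = w j := by
  rw [Noncrossing, List.ofFn_eq_map]
  constructor
  · intro h i j l p hij hjl hlp hil hjp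
    have hsub : [i, j, l, p] <+ List.finRange N := by
      simp only [sublist_finRange_iff, ← List.isChain_iff_pairwise, List.isChain_cons_cons,
        List.isChain_singleton, and_true]
      exact ⟨hij, hjl, hlp⟩
    refine h _ _ ?_
    simpa only [List.map_cons, List.map_nil, ← hil, ← hjp] using hsub.map w
  · intro h a b hab
    obtain ⟨is, his, heq⟩ := List.sublist_map_iff.1 hab
    obtain ⟨i, j, l, p, rfl⟩ := List.length_eq_four.1 (by simpa using congrArg List.length heq.symm)
    simp only [sublist_finRange_iff, ← List.isChain_iff_pairwise, List.isChain_cons_cons,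
      List.isChain_singleton, and_true] at his
    simp only [List.map_cons, List.map_nil, List.cons.injEq, and_true] at heq
    obtain ⟨hai, hbj, hal, hbp⟩ := heq
    rw [hai, hbj]
    exact h i j l p his.1 his.2.1 his.2.2 (hai.symm.trans hal) (hbj.symm.trans hbp)

lemma count_ofFn [DecidableEq α] {N : ℕ} (w : Fin N → α) (a : α) :
    (List.ofFn w).count a = (univ.filter fun i => w i = a).card := by
  rw [← Multiset.coe_count, ← Fin.univ_val_map, Multiset.count_map, Finset.card_def,
    Finset.filter_val]
  simp only [eq_comm]

variable {n : ℕ}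

lemma ofFn_mem_quasiStirlingWords_univ_iff {w : Fin (2 * n) → Fin n} :
    List.ofFn w ∈ quasiStirlingWords univ ↔ w ∈ quasiStirlingSet n := by
  simp only [mem_quasiStirlingWords, IsQuasiStirling, Finset.eq_univ_iff_forall, List.mem_toFinset,
    noncrossing_ofFn_iff, count_ofFn, quasiStirlingSet, Finset.mem_filter, Finset.mem_univ,
    true_and]
  refine ⟨fun h => ⟨fun a => count_ofFn w a ▸ h.1.1 a (h.2 a), h.1.2⟩, fun h => ?_⟩
  have hcount (a : Fin n) : (List.ofFn w).count a = 2 := (count_ofFn w a).trans (h.1 a)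
  exact ⟨⟨fun a _ => h.1 a, h.2⟩, fun a => List.count_pos_iff.1 ((hcount a).symm ▸ two_pos)⟩

lemma sum_quasiStirlingSet {β : Type*} [AddCommMonoid β] (f : List (Fin n) → β) :
    ∑ w ∈ quasiStirlingSet n, f (List.ofFn w) = ∑ w ∈ quasiStirlingWords univ, f w := by
  refine Finset.sum_bij (fun w _ => List.ofFn w)
    (fun w hw => ofFn_mem_quasiStirlingWords_univ_iff.2 hw)
    (fun w _ w' _ h => List.ofFn_injective h) (fun l hl => ?_) fun _ _ => rfl
  have hlen : l.length = 2 * n := by simpa using length_of_mem_quasiStirlingWords hl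
  obtain ⟨w, rfl⟩ : ∃ w : Fin (2 * n) → Fin n, List.ofFn w = l :=
    hlen ▸ ⟨l.get, List.ofFn_get l⟩
  exact ⟨w, ofFn_mem_quasiStirlingWords_univ_iff.1 hl, rfl⟩

lemma sum_descentWeight_quasiStirlingSet (n : ℕ) :
    ∑ w ∈ quasiStirlingSet n, descentWeight (2 * n + 1) (desW w) =
      burgersSeq descentDerivation (1 + X) n := by
  have h := sum_wordWeight_quasiStirlingWords (univ : Finset (Fin n))
  rw [← sum_quasiStirlingSet, Finset.card_univ, Fintype.card_fin] at h
  simpa only [wordWeight, List.length_ofFn, descents_ofFn] using h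

end Words

section DescentPolynomial

/-- The generating polynomial of descents over quasi-Stirling permutations of size `n`. -/
noncomputable def descentPolynomial (n : ℕ) : ℝ[X] := ∑ w ∈ quasiStirlingSet n, X ^ desW w

lemma coeff_descentPolynomial (n j : ℕ) : (descentPolynomial n).coeff j =
    ((quasiStirlingSet n).filter fun w => desW w = j).card := by
  simp only [descentPolynomial, finsetSum_coeff, coeff_X_pow, Finset.sum_boole, eq_comm]

lemma eval_one_descentPolynomial (n : ℕ) :
    (descentPolynomial n).eval 1 = (quasiStirlingSet n).card := by
  simp [descentPolynomial, eval_finsetSum]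

/-- The polynomial `(n + 1) ∑ w, descentWeight (2 * n + 1) (desW w)`, in the form given by Lagrange
inversion. -/
noncomputable def lagrangePolynomial (n : ℕ) : ℝ[X] := descentDerivation^[n] ((1 + X) ^ (n + 1))

lemma natDegree_one_add_X_pow (k : ℕ) : ((1 + X : ℝ[X]) ^ k).natDegree = k := by
  rw [natDegree_pow, add_comm, ← C_1, natDegree_X_add_C, mul_one]

lemma splits_one_add_X_pow (k : ℕ) : ((1 + X : ℝ[X]) ^ k).Splits := by
  rw [add_comm]
  exact (Splits.X_add_C 1).pow k

lemma roots_one_add_X_pow (k : ℕ) : ((1 + X : ℝ[X]) ^ k).roots = Multiset.replicate k (-1) := by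
  rw [add_comm, roots_pow, ← C_1, roots_X_add_C, Multiset.nsmul_singleton]

lemma natDegree_lagrangePolynomial (n : ℕ) : (lagrangePolynomial n).natDegree = 2 * n + 1 := by
  have hdeg := natDegree_one_add_X_pow (n + 1)
  rw [lagrangePolynomial, natDegree_iterate_descentDerivation (by omega), hdeg]
  ring

lemma splits_lagrangePolynomial (n : ℕ) : (lagrangePolynomial n).Splits :=
  splits_iterate_descentDerivation (splits_one_add_X_pow (n + 1)) n

lemma mem_Icc_of_mem_roots_lagrangePolynomial {n : ℕ} :
    ∀ x ∈ (lagrangePolynomial n).roots, x ∈ Set.Icc (-1 : ℝ) 0 := by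
  have hdeg := natDegree_one_add_X_pow (n + 1)
  refine mem_Icc_of_mem_roots_iterate_descentDerivation (splits_one_add_X_pow (n + 1)) (by omega)
    (fun x hx => ?_) n
  rw [roots_one_add_X_pow] at hx
  rw [Multiset.eq_of_mem_replicate hx]
  norm_num

lemma card_roots_lagrangePolynomial (n : ℕ) : (lagrangePolynomial n).roots.card = 2 * n + 1 := by
  rw [splits_iff_card_roots.1 (splits_lagrangePolynomial n), natDegree_lagrangePolynomial]

lemma sum_roots_lagrangePolynomial {n : ℕ} (hn : n ≠ 0) :
    (lagrangePolynomial n).roots.sum = -(5 * n + 3) / 4 := by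
  have hdeg := natDegree_one_add_X_pow (n + 1)
  have hsum := sum_roots_iterate_descentDerivation (splits_one_add_X_pow (n + 1)) (by omega) n
  rw [hdeg, roots_one_add_X_pow, Multiset.sum_replicate, nsmul_eq_mul,
    ← lagrangePolynomial] at hsum
  push_cast at hsum
  refine mul_left_cancel₀ (mul_ne_zero four_ne_zero (Nat.cast_ne_zero.2 hn)) ?_
  linear_combination hsum

lemma desW_le {n : ℕ} (w : Fin (2 * n) → Fin n) : desW w ≤ 2 * n := by
  rw [← descents_ofFn]
  exact (descents_le_length _).trans_eq List.length_ofFn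

theorem descentPolynomial_eq_C_mul_bernoulliSumPGF (n : ℕ) :
    descentPolynomial n = C ((lagrangePolynomial n).leadingCoeff / (n + 1)) *
      bernoulliSumPGF ((lagrangePolynomial n).roots.map (1 + ·)) := by
  refine sum_X_pow_eq_of_sum_descentWeight (fun w _ => ?_) ?_
  · rw [card_roots_lagrangePolynomial]
    exact (desW_le w).trans (Nat.le_succ _)
  · have hn : (n : ℝ) + 1 ≠ 0 := n.cast_add_one_ne_zero
    have hlagrange : C ((n : ℝ) + 1) * burgersSeq descentDerivation (1 + X) n =
        lagrangePolynomial n := by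
      simpa [lagrangePolynomial] using succ_mul_burgersSeq descentDerivation (1 + X) n
    rw [card_roots_lagrangePolynomial, sum_descentWeight_quasiStirlingSet]
    refine mul_left_cancel₀ (C_ne_zero.2 hn) ?_
    rw [hlagrange, ← mul_assoc, ← C_mul, mul_div_cancel₀ _ hn]
    exact (splits_lagrangePolynomial n).eq_prod_roots

lemma leadingCoeff_lagrangePolynomial_div_pos (n : ℕ) :
    0 < (lagrangePolynomial n).leadingCoeff / (n + 1) := by
  have hdeg := natDegree_lagrangePolynomial n
  have hne : (lagrangePolynomial n).leadingCoeff / ((n : ℝ) + 1) ≠ 0 :=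
    div_ne_zero (leadingCoeff_ne_zero.2 (ne_zero_of_natDegree_gt (n := 0) (by omega)))
      n.cast_add_one_ne_zero
  have heval := congrArg (eval 1) (descentPolynomial_eq_C_mul_bernoulliSumPGF n)
  rw [eval_one_descentPolynomial, eval_mul, eval_C, eval_one_bernoulliSumPGF, mul_one] at heval
  exact (heval ▸ Nat.cast_nonneg _).lt_of_ne hne.symm

end DescentPolynomial

/-- If `m` maximizes the number of quasi-Stirling permutations of size `n ≥ 1`
with exactly `m` descents, then `|m - (3n+1)/4| < 1`. -/
theorem modal_descents_quasiStirling (n : ℕ) (hn : 1 ≤ n) (m : ℕ)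
    (hm : ∀ j : ℕ, ((quasiStirlingSet n).filter fun w => desW w = j).card
        ≤ ((quasiStirlingSet n).filter fun w => desW w = m).card) :
    |(m : ℝ) - (3 * (n : ℝ) + 1) / 4| < 1 := by
  set s : Multiset ℝ := (lagrangePolynomial n).roots.map (1 + ·) with hs
  have hs_sum : s.sum = (3 * n + 1) / 4 := by
    rw [hs, Multiset.sum_map_add, Multiset.map_const', Multiset.sum_replicate, Multiset.map_id',
      sum_roots_lagrangePolynomial (by omega), card_roots_lagrangePolynomial, nsmul_one]
    push_cast
    ring
  have hs_Icc : ∀ p ∈ s, p ∈ Set.Icc (0 : ℝ) 1 := by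
    intro p hp
    obtain ⟨x, hx, rfl⟩ := Multiset.mem_map.1 hp
    have ⟨hx₀, hx₁⟩ := mem_Icc_of_mem_roots_lagrangePolynomial x hx
    constructor <;> linarith
  rw [← hs_sum]
  refine abs_mode_sub_mean_lt_one hs_Icc fun j =>
    le_of_mul_le_mul_left ?_ (leadingCoeff_lagrangePolynomial_div_pos n)
  rw [← coeff_C_mul, ← coeff_C_mul, ← descentPolynomial_eq_C_mul_bernoulliSumPGF,
    coeff_descentPolynomial, coeff_descentPolynomial]
  exact_mod_cast hm j
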